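/- Fix integers A ≥ 2 and z ≥ 1 with A ≥ z, a real v ≥ 0, and reals b > 0 and τ₀ > 0. For 0 < q < 1/2 set p = 1 − q, λ = q/p, [n] = (1 − λ^n)/(1 − λ), P_A(z) = (I_{4pq}(z,1/2) − λ^{A+1})/(1 − λ^{A+1}), R(q) = b·[ (q z/(2p)) I_{4pq}(z,1/2) − ((A+1)λ^{A+1}/(p(1−λ)^3 [A+1]^2)) I_{(p−q)^2}(1/2,z) + ((2−λ+λ^{A+2})/((1−λ)^2[A+1])) p^{z−1}q^z/B(z,z) + P_A(z)(v/b+1) ], T(q) = τ₀·[ (z/(2p)) I_{4pq}(z,1/2) + ((A+1)/(p(1−λ)^2[A+1])) I_{(p−q)^2}(1/2,z) − p^{z−1}q^z/(p(1−λ)B(z,z)) + 1/q ], and Γ_A(q) = R(q)/T(q). Then Γ_A(q)/q^{z+1} → (b/τ₀)·( 2 C(2z−1, z)(v/b+1) + 2/B(z,z) ) as q → 0⁺, where C(n,k) denotes the binomial coefficient; in particular this limit does not depend on A. -/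

import Mathlib

open scoped BigOperators
open Filter

/-- The Beta function `B(a,b) = ∫_0^1 t^(a-1) (1-t)^(b-1) dt`. -/
noncomputable def Beta (a b : ℝ) : ℝ :=
  ∫ t in (0:ℝ)..1, t ^ (a - 1) * (1 - t) ^ (b - 1)

/-- The regularized incomplete Beta function
`I_x(a,b) = (1/B(a,b)) ∫_0^x t^(a-1) (1-t)^(b-1) dt`. -/
noncomputable def regBeta (x a b : ℝ) : ℝ :=
  (∫ t in (0:ℝ)..x, t ^ (a - 1) * (1 - t) ^ (b - 1)) / Beta a b

/-!
Since `q * T / τ₀ → 1`, only the leading term of the revenue, of order `q ^ z`, matters. There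
`I_x(z, 1/2) ~ x ^ z / (z * B(z, 1/2))` at `x = 4 * p * q`, by the behaviour of the incomplete Beta
integral at its lower endpoint. Legendre's duplication formula, in the form
`B(z, 1/2) = 2 ^ (2 * z - 1) * B(z, z)`, turns the constant into `2 * C(2 * z - 1, z)`. The
parameter `A` disappears because `λ ^ (A + 1)` is `o(q ^ z)` for `z ≤ A`, while `[A + 1] → 1`.
-/

open Set MeasureTheory intervalIntegral
open scoped Topology Nat

theorem tendsto_nhdsWithin_of_continuousAt {X Y : Type*} [TopologicalSpace X] [TopologicalSpace Y]
    {f : X → Y} {s : Set X} {x : X} {y : Y} (hf : ContinuousAt f x) (hfx : f x = y) :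
    Tendsto f (𝓝[s] x) (𝓝 y) :=
  hfx ▸ hf.continuousWithinAt

theorem Beta_eq_beta {a b : ℝ} (ha : 0 < a) (hb : 0 < b) :
    Beta a b = ProbabilityTheory.beta a b := by
  have integral_eq_ofReal : Complex.betaIntegral a b = (Beta a b : ℂ) := by
    rw [Beta, ← intervalIntegral.integral_ofReal, Complex.betaIntegral]
    refine integral_congr fun t ht ↦ ?_
    rw [uIcc_of_le zero_le_one] at ht
    simp only [Complex.ofReal_mul, Complex.ofReal_cpow ht.1,
      Complex.ofReal_cpow (sub_nonneg.2 ht.2), Complex.ofReal_sub, Complex.ofReal_one]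
  rw [ProbabilityTheory.beta_eq_betaIntegralReal a b ha hb, integral_eq_ofReal, Complex.ofReal_re]

theorem Beta_pos {a b : ℝ} (ha : 0 < a) (hb : 0 < b) : 0 < Beta a b :=
  Beta_eq_beta ha hb ▸ ProbabilityTheory.beta_pos ha hb

theorem Beta_one_half_right {a : ℝ} (ha : 0 < a) :
    Beta a (1 / 2) = 2 ^ (2 * a - 1) * Beta a a := by
  have hΓ : Real.Gamma (a + 1 / 2) ≠ 0 := (Real.Gamma_pos_of_pos (by positivity)).ne'
  have hΓ₂ : Real.Gamma (2 * a) ≠ 0 := (Real.Gamma_pos_of_pos (by positivity)).ne'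
  have rpow_cancel : (2 : ℝ) ^ (2 * a - 1) * 2 ^ (1 - 2 * a) = 1 := by
    rw [← Real.rpow_add two_pos]
    norm_num
  rw [Beta_eq_beta ha one_half_pos, Beta_eq_beta ha ha, ProbabilityTheory.beta,
    ProbabilityTheory.beta, ← two_mul, Real.Gamma_one_half_eq, ← mul_div_assoc,
    div_eq_div_iff hΓ hΓ₂]
  linear_combination
    -Real.Gamma a * 2 ^ (2 * a - 1) * Real.Gamma_mul_Gamma_add_half a
      - Real.Gamma a * Real.Gamma (2 * a) * √Real.pi * rpow_cancel

theorem choose_mul_Beta {m n : ℕ} (hm : 0 < m) (hn : 0 < n) :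
    ((m + n - 1).choose m : ℝ) * m * Beta m n = 1 := by
  obtain ⟨m, rfl⟩ := Nat.exists_eq_add_one.2 hm
  obtain ⟨n, rfl⟩ := Nat.exists_eq_add_one.2 hn
  have choose_mul_factorials :
      ((m + 1 + n).choose (m + 1) : ℝ) * ((m + 1) * m !) * n ! = (m + 1 + n)! := by
    rw [Nat.choose_symm_add]
    exact_mod_cast Nat.add_choose_mul_factorial_mul_factorial (m + 1) n
  rw [Beta_eq_beta (mod_cast hm) (mod_cast hn), ProbabilityTheory.beta, ← Nat.cast_add,
    ← add_assoc]
  simp only [Nat.cast_add_one, Real.Gamma_nat_eq_factorial, add_tsub_cancel_right]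
  rw [← mul_div_assoc, div_eq_one_iff_eq (by positivity), ← choose_mul_factorials]
  ring

theorem four_pow_div_Beta_one_half {n : ℕ} (hn : 0 < n) :
    4 ^ n / (n * Beta n (1 / 2)) = 2 * ((2 * n - 1).choose n : ℝ) := by
  have hn' : (0 : ℝ) < n := mod_cast hn
  have choose_mul : ((2 * n - 1).choose n : ℝ) * n * Beta n n = 1 :=
    two_mul n ▸ choose_mul_Beta hn hn
  have two_mul_rpow : 2 * (2 : ℝ) ^ (2 * (n : ℝ) - 1) = 4 ^ n := by
    rw [Real.rpow_sub_one two_ne_zero, Real.rpow_mul two_pos.le, Real.rpow_natCast,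
      mul_div_cancel₀ _ two_ne_zero]
    norm_num
  rw [div_eq_iff (mul_pos hn' (Beta_pos hn' one_half_pos)).ne', Beta_one_half_right hn',
    ← two_mul_rpow]
  linear_combination -2 * (2 : ℝ) ^ (2 * (n : ℝ) - 1) * choose_mul

theorem intervalIntegrable_rpow_mul {a r : ℝ} {g : ℝ → ℝ} (ha : 0 < a) (hr : 0 ≤ r)
    (hg : ContinuousOn g (Icc 0 r)) :
    IntervalIntegrable (fun t ↦ t ^ (a - 1) * g t) volume 0 r :=
  (intervalIntegrable_rpow' (by linarith)).mul_continuousOn (by rwa [uIcc_of_le hr])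

theorem hasDerivAt_integral_rpow_mul {a r x : ℝ} {g : ℝ → ℝ} (ha : 0 < a)
    (hg : ContinuousOn g (Icc 0 r)) (hx : x ∈ Ioo 0 r) :
    HasDerivAt (fun x ↦ ∫ t in (0 : ℝ)..x, t ^ (a - 1) * g t) (x ^ (a - 1) * g x) x := by
  have integrand_cont : ContinuousOn (fun t ↦ t ^ (a - 1) * g t) (Ioo 0 r) :=
    (continuousOn_id.rpow_const fun t ht ↦ .inl ht.1.ne').mul (hg.mono Ioo_subset_Icc_self)
  exact integral_hasDerivAt_right
    (intervalIntegrable_rpow_mul ha hx.1.le (hg.mono (Icc_subset_Icc_right hx.2.le)))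
    (integrand_cont.stronglyMeasurableAtFilter isOpen_Ioo x hx)
    (integrand_cont.continuousAt (isOpen_Ioo.mem_nhds hx))

theorem tendsto_integral_rpow_mul_div_rpow {a r : ℝ} {g : ℝ → ℝ} (ha : 0 < a) (hr : 0 < r)
    (hg : ContinuousOn g (Icc 0 r)) :
    Tendsto (fun x ↦ (∫ t in (0 : ℝ)..x, t ^ (a - 1) * g t) / x ^ a) (𝓝[>] 0) (𝓝 (g 0 / a)) := by
  have Ioo_mem : ∀ᶠ x in 𝓝[>] (0 : ℝ), x ∈ Ioo 0 r := Ioo_mem_nhdsGT hr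
  have nhdsGT_le : 𝓝[>] (0 : ℝ) ≤ 𝓝[Icc 0 r] 0 := nhdsWithin_le_of_mem (Icc_mem_nhdsGT hr)
  have zero_mem : (0 : ℝ) ∈ Icc 0 r := left_mem_Icc.2 hr.le
  have integral_tendsto :
      Tendsto (fun x ↦ ∫ t in (0 : ℝ)..x, t ^ (a - 1) * g t) (𝓝[>] 0) (𝓝 0) := by
    have primitive_cont := continuousOn_primitive_interval'
      (intervalIntegrable_rpow_mul ha hr.le hg) left_mem_uIcc
    rw [uIcc_of_le hr.le] at primitive_cont
    simpa using (primitive_cont 0 zero_mem).tendsto.mono_left nhdsGT_le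
  have rpow_tendsto : Tendsto (· ^ a) (𝓝[>] (0 : ℝ)) (𝓝 0) :=
    tendsto_nhdsWithin_of_continuousAt (Real.continuousAt_rpow_const 0 a (.inr ha.le))
      (Real.zero_rpow ha.ne')
  have g_tendsto : Tendsto g (𝓝[>] 0) (𝓝 (g 0)) := (hg 0 zero_mem).tendsto.mono_left nhdsGT_le
  refine HasDerivAt.lhopital_zero_nhdsGT
    (Ioo_mem.mono fun x hx ↦ hasDerivAt_integral_rpow_mul ha hg hx)
    (Ioo_mem.mono fun x hx ↦ Real.hasDerivAt_rpow_const (.inl hx.1.ne'))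
    (Ioo_mem.mono fun x hx ↦ (mul_pos ha (Real.rpow_pos_of_pos hx.1 _)).ne')
    integral_tendsto rpow_tendsto ((g_tendsto.div_const a).congr' ?_)
  filter_upwards [Ioo_mem] with x hx
  rw [mul_comm a, mul_div_mul_left _ _ (Real.rpow_pos_of_pos hx.1 _).ne']

theorem tendsto_regBeta_div_rpow_nhdsGT_zero {a : ℝ} (b : ℝ) (ha : 0 < a) :
    Tendsto (fun x ↦ regBeta x a b / x ^ a) (𝓝[>] 0) (𝓝 (1 / (a * Beta a b))) := by
  have one_sub_rpow_continuousOn :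
      ContinuousOn (fun t : ℝ ↦ (1 - t) ^ (b - 1)) (Icc 0 (1 / 2)) :=
    ContinuousOn.rpow_const (by fun_prop) fun t ht ↦ .inl (by linarith [ht.2])
  have h := (tendsto_integral_rpow_mul_div_rpow ha one_half_pos one_sub_rpow_continuousOn).div_const
    (Beta a b)
  rw [sub_zero, Real.one_rpow, div_div] at h
  exact h.congr fun x ↦ div_right_comm _ _ _

theorem continuousOn_regBeta {a b : ℝ} (ha : 0 < a) (hb : 0 < b) :
    ContinuousOn (fun x ↦ regBeta x a b) (Icc 0 1) := by
  have integrable := intervalIntegrable_of_integral_ne_zero (Beta_pos ha hb).ne'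
  rw [← uIcc_of_le zero_le_one]
  exact (continuousOn_primitive_interval' integrable left_mem_uIcc).div_const _

theorem regBeta_one {a b : ℝ} (ha : 0 < a) (hb : 0 < b) : regBeta 1 a b = 1 :=
  div_self (Beta_pos ha hb).ne'

theorem tendsto_regBeta_four_mul_div_rpow {a : ℝ} (b : ℝ) (ha : 0 < a) :
    Tendsto (fun q ↦ regBeta (4 * (1 - q) * q) a b / q ^ a) (𝓝[>] 0)
      (𝓝 (4 ^ a / (a * Beta a b))) := by
  have Ioo_mem : ∀ᶠ q in 𝓝[>] (0 : ℝ), q ∈ Ioo 0 1 := Ioo_mem_nhdsGT one_pos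
  have factor_pos {q : ℝ} (hq : q ∈ Ioo 0 1) : 0 < 4 * (1 - q) :=
    mul_pos four_pos (sub_pos.2 hq.2)
  have arg_tendsto : Tendsto (fun q : ℝ ↦ 4 * (1 - q) * q) (𝓝[>] 0) (𝓝[>] 0) :=
    tendsto_nhdsWithin_iff.2 ⟨tendsto_nhdsWithin_of_continuousAt (by fun_prop) (mul_zero _),
      Ioo_mem.mono fun q hq ↦ mul_pos (factor_pos hq) hq.1⟩
  have factor_tendsto : Tendsto (fun q : ℝ ↦ (4 * (1 - q)) ^ a) (𝓝[>] 0) (𝓝 (4 ^ a)) :=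
    tendsto_nhdsWithin_of_continuousAt (ContinuousAt.rpow_const (by fun_prop) (.inr ha.le))
      (by simp)
  have h := factor_tendsto.mul
    ((tendsto_regBeta_div_rpow_nhdsGT_zero b ha).comp arg_tendsto)
  rw [mul_one_div] at h
  refine h.congr' ?_
  filter_upwards [Ioo_mem] with q hq
  rw [Function.comp_apply, Real.mul_rpow (factor_pos hq).le hq.1.le, ← mul_div_assoc,
    mul_div_mul_left _ _ (Real.rpow_pos_of_pos (factor_pos hq) a).ne']

theorem tendsto_regBeta_four_mul_one_half_div_pow {n : ℕ} (hn : 0 < n) :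
    Tendsto (fun q : ℝ ↦ regBeta (4 * (1 - q) * q) n (1 / 2) / q ^ n) (𝓝[>] 0)
      (𝓝 (2 * ((2 * n - 1).choose n : ℝ))) := by
  have h := tendsto_regBeta_four_mul_div_rpow (1 / 2) (Nat.cast_pos.2 hn)
  simpa only [Real.rpow_natCast, four_pow_div_Beta_one_half hn] using h

theorem tendsto_regBeta_sq_sub {a b : ℝ} (ha : 0 < a) (hb : 0 < b) :
    Tendsto (fun q ↦ regBeta ((1 - q - q) ^ 2) a b) (𝓝[>] 0) (𝓝 1) := by
  have arg_tendsto : Tendsto (fun q : ℝ ↦ (1 - q - q) ^ 2) (𝓝[>] 0) (𝓝[Icc 0 1] 1) := by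
    refine tendsto_nhdsWithin_iff.2
      ⟨tendsto_nhdsWithin_of_continuousAt (by fun_prop) (by simp), ?_⟩
    filter_upwards [Ioo_mem_nhdsGT one_pos] with q hq
    exact ⟨sq_nonneg _, (sq_le_one_iff_abs_le_one _).2
      (abs_le.2 ⟨by linarith [hq.2], by linarith [hq.1]⟩)⟩
  have regBeta_tendsto := (continuousOn_regBeta ha hb 1 (right_mem_Icc.2 zero_le_one)).tendsto
  rw [regBeta_one ha hb] at regBeta_tendsto
  exact regBeta_tendsto.comp arg_tendsto

/-- The ratio `λ = q / p` of the attacker's hashrate `q` to the honest hashrate `p = 1 - q`. -/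
noncomputable def hashRatio (q : ℝ) : ℝ :=
  q / (1 - q)

/-- The geometric sum `[n] = (1 - λ ^ n) / (1 - λ)` of the paper, as a function of `q`. It is kept
in closed form, so at `λ = 1` it is the junk value `0` rather than `n`. -/
noncomputable def geomBracket (n : ℕ) (q : ℝ) : ℝ :=
  (1 - hashRatio q ^ n) / (1 - hashRatio q)

/-- The probability `P_A(z)` that a cycle of the `A`-Nakamoto strategy ends with a successful double
spend after `z` confirmations. -/
noncomputable def doubleSpendProb (A z : ℕ) (q : ℝ) : ℝ :=
  (regBeta (4 * (1 - q) * q) z (1 / 2) - hashRatio q ^ (A + 1)) / (1 - hashRatio q ^ (A + 1))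

/-- The part of the expected revenue per cycle `R`, in units of the coinbase reward `b`, that does
not carry the factor `P_A(z)`. -/
noncomputable def blockYield (A z : ℕ) (q : ℝ) : ℝ :=
  q * z / (2 * (1 - q)) * regBeta (4 * (1 - q) * q) z (1 / 2)
    - (A + 1) * hashRatio q ^ (A + 1)
        / ((1 - q) * (1 - hashRatio q) ^ 3 * geomBracket (A + 1) q ^ 2)
        * regBeta ((1 - q - q) ^ 2) (1 / 2) z
    + (2 - hashRatio q + hashRatio q ^ (A + 2))
        / ((1 - hashRatio q) ^ 2 * geomBracket (A + 1) q)
        * ((1 - q) ^ (z - 1) * q ^ z / Beta z z)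

/-- The expected duration `T` of a cycle, in units of the interblock time `τ₀`. -/
noncomputable def cycleLength (A z : ℕ) (q : ℝ) : ℝ :=
  z / (2 * (1 - q)) * regBeta (4 * (1 - q) * q) z (1 / 2)
    + (A + 1) / ((1 - q) * (1 - hashRatio q) ^ 2 * geomBracket (A + 1) q)
        * regBeta ((1 - q - q) ^ 2) (1 / 2) z
    - (1 - q) ^ (z - 1) * q ^ z / ((1 - q) * (1 - hashRatio q) * Beta z z)
    + 1 / q

/-- The revenue ratio `Γ_A = R / T`. A successful double spend earns `v + b`, which is written
`b * (v / b + 1)` in the paper. -/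
noncomputable def revenueRatio (A z : ℕ) (v b τ₀ q : ℝ) : ℝ :=
  (b * blockYield A z q + doubleSpendProb A z q * (v + b)) / (τ₀ * cycleLength A z q)

@[simp]
theorem hashRatio_zero : hashRatio 0 = 0 :=
  zero_div _

@[simp]
theorem geomBracket_succ_zero (n : ℕ) : geomBracket (n + 1) 0 = 1 := by
  simp [geomBracket]

theorem continuousAt_hashRatio_zero : ContinuousAt hashRatio 0 :=
  continuousAt_id.div (by fun_prop) (by norm_num)

theorem continuousAt_geomBracket_zero (n : ℕ) : ContinuousAt (geomBracket n) 0 :=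
  (continuousAt_const.sub (continuousAt_hashRatio_zero.pow n)).div
    (continuousAt_const.sub continuousAt_hashRatio_zero) (by simp)

theorem tendsto_hashRatio_pow_div_pow {m n : ℕ} (hmn : m < n) :
    Tendsto (fun q ↦ hashRatio q ^ n / q ^ m) (𝓝[>] 0) (𝓝 0) := by
  have quotient_tendsto :
      Tendsto (fun q : ℝ ↦ q ^ (n - m) / (1 - q) ^ n) (𝓝[>] 0) (𝓝 0) :=
    tendsto_nhdsWithin_of_continuousAt (by fun_prop (disch := simp))
      (by simp [Nat.sub_ne_zero_of_lt hmn])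
  refine quotient_tendsto.congr' ?_
  filter_upwards [self_mem_nhdsWithin] with q (hq : 0 < q)
  rw [hashRatio, div_pow, pow_sub₀ _ hq.ne' hmn.le, ← div_eq_mul_inv, div_right_comm]

theorem tendsto_doubleSpendProb_div_pow {A z : ℕ} (hz : 0 < z) (hzA : z ≤ A) :
    Tendsto (fun q ↦ doubleSpendProb A z q / q ^ z) (𝓝[>] 0)
      (𝓝 (2 * ((2 * z - 1).choose z : ℝ))) := by
  have hashRatio_cont := continuousAt_hashRatio_zero
  have denominator_tendsto : Tendsto (fun q ↦ 1 - hashRatio q ^ (A + 1)) (𝓝[>] 0) (𝓝 1) :=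
    tendsto_nhdsWithin_of_continuousAt (by fun_prop) (by simp)
  have h := ((tendsto_regBeta_four_mul_one_half_div_pow hz).sub
    (tendsto_hashRatio_pow_div_pow (Nat.lt_succ_of_le hzA))).div denominator_tendsto one_ne_zero
  rw [sub_zero, div_one] at h
  refine h.congr fun q ↦ ?_
  rw [Pi.div_apply, ← sub_div, div_right_comm, doubleSpendProb]

theorem tendsto_blockYield_div_pow {A z : ℕ} (hz : 0 < z) (hzA : z ≤ A) :
    Tendsto (fun q ↦ blockYield A z q / q ^ z) (𝓝[>] 0) (𝓝 (2 / Beta z z)) := by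
  have hashRatio_cont := continuousAt_hashRatio_zero
  have geomBracket_cont := continuousAt_geomBracket_zero (A + 1)
  have first_coeff_tendsto : Tendsto (fun q : ℝ ↦ q * z / (2 * (1 - q))) (𝓝[>] 0) (𝓝 0) :=
    tendsto_nhdsWithin_of_continuousAt (by fun_prop (disch := simp)) (by simp)
  have second_coeff_tendsto : Tendsto (fun q : ℝ ↦
      ((A : ℝ) + 1) / ((1 - q) * (1 - hashRatio q) ^ 3 * geomBracket (A + 1) q ^ 2))
      (𝓝[>] 0) (𝓝 ((A : ℝ) + 1)) :=
    tendsto_nhdsWithin_of_continuousAt (by fun_prop (disch := simp)) (by simp)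
  have third_term_tendsto : Tendsto (fun q : ℝ ↦ (2 - hashRatio q + hashRatio q ^ (A + 2))
      / ((1 - hashRatio q) ^ 2 * geomBracket (A + 1) q) * ((1 - q) ^ (z - 1) / Beta z z))
      (𝓝[>] 0) (𝓝 (2 / Beta z z)) :=
    tendsto_nhdsWithin_of_continuousAt (by fun_prop (disch := simp)) (by simp [div_eq_mul_inv])
  have h := ((first_coeff_tendsto.mul (tendsto_regBeta_four_mul_one_half_div_pow hz)).sub
    ((second_coeff_tendsto.mul (tendsto_hashRatio_pow_div_pow (Nat.lt_succ_of_le hzA))).mul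
      (tendsto_regBeta_sq_sub one_half_pos (Nat.cast_pos.2 hz)))).add third_term_tendsto
  simp only [zero_mul, mul_zero, sub_zero, zero_add] at h
  refine h.congr' ?_
  filter_upwards [self_mem_nhdsWithin] with q (hq : 0 < q)
  rw [blockYield]
  field_simp

theorem tendsto_mul_cycleLength (A : ℕ) {z : ℕ} (hz : 0 < z) :
    Tendsto (fun q ↦ q * cycleLength A z q) (𝓝[>] 0) (𝓝 1) := by
  have hashRatio_cont := continuousAt_hashRatio_zero
  have geomBracket_cont := continuousAt_geomBracket_zero (A + 1)
  have Beta_ne_zero : Beta z z ≠ 0 := (Beta_pos (Nat.cast_pos.2 hz) (Nat.cast_pos.2 hz)).ne'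
  have first_coeff_tendsto :
      Tendsto (fun q : ℝ ↦ q * z / (2 * (1 - q)) * q ^ z) (𝓝[>] 0) (𝓝 0) :=
    tendsto_nhdsWithin_of_continuousAt (by fun_prop (disch := simp)) (by simp)
  have second_coeff_tendsto : Tendsto (fun q : ℝ ↦
      q * (A + 1) / ((1 - q) * (1 - hashRatio q) ^ 2 * geomBracket (A + 1) q)) (𝓝[>] 0) (𝓝 0) :=
    tendsto_nhdsWithin_of_continuousAt (by fun_prop (disch := simp)) (by simp)
  have third_term_tendsto : Tendsto (fun q : ℝ ↦
      q * ((1 - q) ^ (z - 1) * q ^ z) / ((1 - q) * (1 - hashRatio q) * Beta z z))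
      (𝓝[>] 0) (𝓝 0) :=
    tendsto_nhdsWithin_of_continuousAt (by fun_prop (disch := simpa)) (by simp)
  have h := (((first_coeff_tendsto.mul (tendsto_regBeta_four_mul_one_half_div_pow hz)).add
    (second_coeff_tendsto.mul (tendsto_regBeta_sq_sub one_half_pos (Nat.cast_pos.2 hz)))).sub
      third_term_tendsto).add_const 1
  simp only [zero_mul, sub_zero, zero_add] at h
  refine h.congr' ?_
  filter_upwards [self_mem_nhdsWithin] with q (hq : 0 < q)
  rw [cycleLength]
  field_simp

theorem nakamoto_revenue_ratio_small_q_general {A z : ℕ} (hz : 0 < z) (hzA : z ≤ A) (v b : ℝ)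
    {τ₀ : ℝ} (hτ₀ : τ₀ ≠ 0) :
    Tendsto (fun q ↦ revenueRatio A z v b τ₀ q / q ^ (z + 1)) (𝓝[>] 0)
      (𝓝 ((b * (2 / Beta z z) + 2 * ((2 * z - 1).choose z : ℝ) * (v + b)) / τ₀)) := by
  have revenue_tendsto := ((tendsto_blockYield_div_pow hz hzA).const_mul b).add
    ((tendsto_doubleSpendProb_div_pow hz hzA).mul_const (v + b))
  have duration_tendsto := (tendsto_mul_cycleLength A hz).const_mul τ₀
  rw [mul_one] at duration_tendsto
  refine (revenue_tendsto.div duration_tendsto hτ₀).congr' ?_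
  filter_upwards [self_mem_nhdsWithin] with q (hq : 0 < q)
  rw [Pi.div_apply, revenueRatio, pow_succ]
  field_simp

/-- the revenue ratio satisfies
`Γ_A(q)/q^(z+1) → (b/τ₀)(2 C(2z-1,z)(v/b+1) + 2/B(z,z))` as `q → 0⁺`,
independently of `A`. -/
theorem nakamoto_revenue_ratio_small_q (A z : ℕ) (hA2 : 2 ≤ A) (hz : 1 ≤ z) (hAz : z ≤ A)
    (v b τ₀ : ℝ) (hv : 0 ≤ v) (hb : 0 < b) (hτ : 0 < τ₀) :
    Tendsto (fun q : ℝ =>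
        (let p : ℝ := 1 - q
         let lam : ℝ := q / p
         (b * (q * (z : ℝ) / (2 * p) * regBeta (4 * p * q) (z : ℝ) (1 / 2)
            - ((A : ℝ) + 1) * lam ^ (A + 1)
                / (p * (1 - lam) ^ 3 * ((1 - lam ^ (A + 1)) / (1 - lam)) ^ 2)
                * regBeta ((p - q) ^ 2) (1 / 2) (z : ℝ)
            + (2 - lam + lam ^ (A + 2))
                / ((1 - lam) ^ 2 * ((1 - lam ^ (A + 1)) / (1 - lam)))
                * (p ^ (z - 1) * q ^ z / Beta (z : ℝ) (z : ℝ))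
            + ((regBeta (4 * p * q) (z : ℝ) (1 / 2) - lam ^ (A + 1))
                / (1 - lam ^ (A + 1))) * (v / b + 1)))
         /
         (τ₀ * ((z : ℝ) / (2 * p) * regBeta (4 * p * q) (z : ℝ) (1 / 2)
            + ((A : ℝ) + 1) / (p * (1 - lam) ^ 2 * ((1 - lam ^ (A + 1)) / (1 - lam)))
                * regBeta ((p - q) ^ 2) (1 / 2) (z : ℝ)
            - p ^ (z - 1) * q ^ z / (p * (1 - lam) * Beta (z : ℝ) (z : ℝ))
            + 1 / q))) / q ^ (z + 1))
      (nhdsWithin 0 (Set.Ioi 0))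
      (nhds ((b / τ₀) * (2 * ((2 * z - 1).choose z : ℝ) * (v / b + 1)
        + 2 / Beta (z : ℝ) (z : ℝ)))) := by
  have revenue_factor : v + b = b * (v / b + 1) := by field_simp
  convert nakamoto_revenue_ratio_small_q_general hz hAz v b hτ.ne' using 2
  · rw [revenueRatio, revenue_factor]
    simp only [blockYield, doubleSpendProb, cycleLength, hashRatio, geomBracket]
    ring
  · rw [revenue_factor]
    ring
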